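/- arXiv:2005.01551 — 2 statements merged into one kernel-verified Lean document; each statement's English description precedes it below -/
import Mathlib

section
/- Null free boundary: Let Ω ⊂ ℝⁿ be open and let f : [0,∞) → ℝ be continuous, non-decreasing, and satisfy both condition (1.2) with constants M > 0, γ ∈ [0,3) and condition (5.1) with constants N > 0 and the same γ. If u ∈ C(Ω) is a bounded non-negative viscosity solution of Δ∞u = f(u) in Ω, then the free boundary ∂{u > 0} ∩ Ω has n-dimensional Lebesgue measure zero. -/
open Set Metric Filter MeasureTheory

/-- The infinity Laplacian of a (C²) function `φ` at `x`:
`Δ∞φ(x) = Σ_{i,j} ∂_iφ(x) ∂_jφ(x) ∂_{ij}φ(x)`. -/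
noncomputable def infLap {n : ℕ} (φ : EuclideanSpace ℝ (Fin n) → ℝ)
    (x : EuclideanSpace ℝ (Fin n)) : ℝ :=
  ∑ i : Fin n, ∑ j : Fin n,
    fderiv ℝ φ x (EuclideanSpace.single i 1) * fderiv ℝ φ x (EuclideanSpace.single j 1) *
      fderiv ℝ (fun y => fderiv ℝ φ y (EuclideanSpace.single i 1)) x (EuclideanSpace.single j 1)

/-- `u` is a viscosity supersolution of `Δ∞u = F(x, u(x))` in `Ω`. -/
def IsViscSupersol {n : ℕ} (Ω : Set (EuclideanSpace ℝ (Fin n)))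
    (u : EuclideanSpace ℝ (Fin n) → ℝ)
    (F : EuclideanSpace ℝ (Fin n) → ℝ → ℝ) : Prop :=
  ∀ φ : EuclideanSpace ℝ (Fin n) → ℝ, ContDiff ℝ 2 φ →
    ∀ x₀ ∈ Ω, φ x₀ = u x₀ → IsLocalMin (fun x => u x - φ x) x₀ →
      infLap φ x₀ ≤ F x₀ (φ x₀)

/-- `u` is a viscosity subsolution of `Δ∞u = F(x, u(x))` in `Ω`. -/
def IsViscSubsol {n : ℕ} (Ω : Set (EuclideanSpace ℝ (Fin n)))
    (u : EuclideanSpace ℝ (Fin n) → ℝ)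
    (F : EuclideanSpace ℝ (Fin n) → ℝ → ℝ) : Prop :=
  ∀ φ : EuclideanSpace ℝ (Fin n) → ℝ, ContDiff ℝ 2 φ →
    ∀ x₀ ∈ Ω, φ x₀ = u x₀ → IsLocalMax (fun x => u x - φ x) x₀ →
      F x₀ (φ x₀) ≤ infLap φ x₀

/-- `u` is a viscosity solution of `Δ∞u = F(x, u(x))` in `Ω`. -/
def IsViscSol {n : ℕ} (Ω : Set (EuclideanSpace ℝ (Fin n)))
    (u : EuclideanSpace ℝ (Fin n) → ℝ)
    (F : EuclideanSpace ℝ (Fin n) → ℝ → ℝ) : Prop :=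
  IsViscSupersol Ω u F ∧ IsViscSubsol Ω u F

/-- Condition (1.2): for every `T > 0` there is `δ₀ > 0` such that
`0 ≤ f(δt) ≤ M δ^γ f(t)` for all `0 < t ≤ T` and `0 < δ ≤ δ₀`. -/
def Cond12 (f : ℝ → ℝ) (M γ : ℝ) : Prop :=
  ∀ T > 0, ∃ δ₀ > 0, ∀ t : ℝ, 0 < t → t ≤ T → ∀ δ : ℝ, 0 < δ → δ ≤ δ₀ →
    0 ≤ f (δ * t) ∧ f (δ * t) ≤ M * δ ^ γ * f t

/-- Condition (5.1): for every `T > 0` there is `δ₀ > 0` such that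
`f(δt) ≥ N δ^γ f(t) ≥ 0` for all `0 < t ≤ T` and `0 < δ ≤ δ₀`. -/
def Cond51 (f : ℝ → ℝ) (N γ : ℝ) : Prop :=
  ∀ T > 0, ∃ δ₀ > 0, ∀ t : ℝ, 0 < t → t ≤ T → ∀ δ : ℝ, 0 < δ → δ ≤ δ₀ →
    N * δ ^ γ * f t ≤ f (δ * t) ∧ 0 ≤ N * δ ^ γ * f t

lemma infLap_radial {n : ℕ} (P P' P'' : ℝ → ℝ) (hP : ∀ t, HasDerivAt P (P' t) t)
    (hP' : ∀ t, HasDerivAt P' (P'' t) t) (y x : EuclideanSpace ℝ (Fin n)) :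
    infLap (fun z => P (‖z - y‖ ^ 2)) x =
      8 * P' (‖x - y‖ ^ 2) ^ 3 * ‖x - y‖ ^ 2
        + 16 * P' (‖x - y‖ ^ 2) ^ 2 * P'' (‖x - y‖ ^ 2) * (‖x - y‖ ^ 2) ^ 2 := by
  have hn : ∀ z : EuclideanSpace ℝ (Fin n), HasFDerivAt (fun z => ‖z - y‖ ^ 2)
      (2 • (innerSL ℝ (z - y))) z := by
    intro z
    have := (hasFDerivAt_id (𝕜 := ℝ) z).sub_const y |>.norm_sq
    simpa using this
  have h1 : ∀ z : EuclideanSpace ℝ (Fin n), ∀ i,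
      fderiv ℝ (fun z => P (‖z - y‖ ^ 2)) z (EuclideanSpace.single i 1)
        = P' (‖z - y‖ ^ 2) * (2 * (z i - y i)) := by
    intro z i
    have := (hP (‖z - y‖ ^ 2)).comp_hasFDerivAt z (hn z)
    have h2 := this.fderiv
    simp only [Function.comp_def] at h2
    rw [h2]
    simp [EuclideanSpace.inner_single_right]
  have h3 : ∀ i j, fderiv ℝ (fun z => fderiv ℝ (fun z => P (‖z - y‖ ^ 2)) z
      (EuclideanSpace.single i 1)) x (EuclideanSpace.single j 1)
      = P'' (‖x - y‖ ^ 2) * (2 * (x j - y j)) * (2 * (x i - y i))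
        + P' (‖x - y‖ ^ 2) * (2 * (if i = j then 1 else 0)) := by
    intro i j
    have e : (fun z => fderiv ℝ (fun z => P (‖z - y‖ ^ 2)) z (EuclideanSpace.single i 1))
        = fun z : EuclideanSpace ℝ (Fin n) => P' (‖z - y‖ ^ 2) * (2 * (z i - y i)) := by
      funext z; exact h1 z i
    rw [e]
    have a1 := (hP' (‖x - y‖ ^ 2)).comp_hasFDerivAt x (hn x)
    have a2 : HasFDerivAt (fun z : EuclideanSpace ℝ (Fin n) => 2 * (z i - y i))
        ((2 : ℝ) • (EuclideanSpace.proj i : EuclideanSpace ℝ (Fin n) →L[ℝ] ℝ)) x := by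
      have := ((EuclideanSpace.proj i : EuclideanSpace ℝ (Fin n) →L[ℝ] ℝ).hasFDerivAt
        (x := x)).sub_const (y i) |>.const_mul (2 : ℝ)
      simpa using this
    have h2 := (a1.mul a2).fderiv
    have e2 : (fun z : EuclideanSpace ℝ (Fin n) => P' (‖z - y‖ ^ 2) * (2 * (z i - y i)))
      = (P' ∘ fun z => ‖z - y‖ ^ 2) * (fun z : EuclideanSpace ℝ (Fin n) => 2 * (z i - y i)) := rfl
    rw [e2, h2]
    simp [EuclideanSpace.inner_single_right]
    split_ifs <;> ring
  have hs : ‖x - y‖ ^ 2 = ∑ i, (x i - y i) ^ 2 := by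
    rw [EuclideanSpace.norm_sq_eq]; simp
  unfold infLap
  simp only [h3]
  simp only [h1]
  set t := ‖x - y‖ ^ 2
  have e : ∀ i j, P' t * (2 * (x i - y i)) * (P' t * (2 * (x j - y j))) *
      (P'' t * (2 * (x j - y j)) * (2 * (x i - y i)) + P' t * (2 * (if i = j then 1 else 0)))
      = 16 * P' t ^ 2 * P'' t * (x i - y i) ^ 2 * (x j - y j) ^ 2 +
        (if i = j then 8 * P' t ^ 3 * (x i - y i) ^ 2 else 0) := by
    intro i j
    split_ifs with h
    · subst h; ring
    · ring
  simp only [e, Finset.sum_add_distrib, Finset.sum_ite_eq, Finset.mem_univ, if_true]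
  simp only [← Finset.mul_sum, ← Finset.sum_mul, ← hs]
  ring

lemma contDiff_radial {n : ℕ} (P : ℝ → ℝ) (hP : ContDiff ℝ 2 P)
    (y : EuclideanSpace ℝ (Fin n)) : ContDiff ℝ 2 (fun z => P (‖z - y‖ ^ 2)) :=
  hP.comp ((contDiff_id.sub contDiff_const).norm_sq ℝ)

lemma sqrt_taylor (s ρ : ℝ) (hs : 0 ≤ s) (hρ : 0 < ρ) :
    s ≤ ρ + (s^2 - ρ^2) / (2*ρ) - (s^2 - ρ^2)^2 / (8*ρ^3) + (s^2 - ρ^2)^3 / (16 * ρ^5) := by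
  have : ρ + (s^2 - ρ^2) / (2*ρ) - (s^2 - ρ^2)^2 / (8*ρ^3) + (s^2 - ρ^2)^3 / (16 * ρ^5) - s
      = (s - ρ)^4 * (s^2 + 4 * s * ρ + 5 * ρ^2) / (16 * ρ^5) := by
    field_simp; ring
  have h2 : 0 ≤ (s - ρ)^4 * (s^2 + 4 * s * ρ + 5 * ρ^2) / (16 * ρ^5) := by positivity
  linarith

lemma positivity_ball {n : ℕ} (Ω : Set (EuclideanSpace ℝ (Fin n)))
    (f : ℝ → ℝ) (hfmono : MonotoneOn f (Ici 0))
    (u : EuclideanSpace ℝ (Fin n) → ℝ)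
    (huc : ContinuousOn u Ω) (hu0 : ∀ x ∈ Ω, 0 ≤ u x)
    (hsol : IsViscSupersol Ω u (fun _ t => f t)) (y : EuclideanSpace ℝ (Fin n)) (R : ℝ)
    (hR : 0 < R) (hB : closedBall y R ⊆ Ω) (hy : 0 < u y)
    (hf : f (u y) < u y ^ 3 / (4 * R ^ 4)) : ∀ x ∈ ball y R, 0 < u x := by
  set h := u y with hh
  set g : ℝ → ℝ := fun s => h - (3 * h / (2 * R)) * s + (h / (2 * R ^ 2)) * s ^ 2 with hg
  have hgf : ∀ s, g s = h * (1 - s / R) * (1 - s / (2 * R)) := by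
    intro s; simp only [hg]; field_simp; ring
  obtain ⟨x₀, hx₀, hmin⟩ := (isCompact_closedBall y R).exists_isMinOn
    (f := fun x => u x - g ‖x - y‖) ⟨y, by simp [hR.le]⟩
    ((huc.mono hB).sub (by apply Continuous.continuousOn; simp only [hg]; fun_prop))
  by_cases hneg : 0 ≤ u x₀ - g ‖x₀ - y‖
  · intro x hx
    have h1 := hmin (ball_subset_closedBall hx)
    simp only [mem_ofPred_eq] at h1
    have h2 : 0 < g ‖x - y‖ := by
      rw [mem_ball, dist_eq_norm] at hx
      rw [hgf]
      have a : ‖x - y‖ / R < 1 := by rw [div_lt_one hR]; exact hx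
      have b : ‖x - y‖ / (2 * R) < 1 := by rw [div_lt_one (by positivity)]; linarith
      have := sub_pos.2 a
      have := sub_pos.2 b
      positivity
    linarith
  exfalso
  push Not at hneg
  set ρ := ‖x₀ - y‖ with hρd
  have hρR : ρ ≤ R := by rw [mem_closedBall, dist_eq_norm] at hx₀; exact hx₀
  have hρ0 : 0 < ρ := by
    rcases (norm_nonneg (x₀ - y)).lt_or_eq with h' | h'
    · exact h'
    · exfalso
      have e : x₀ = y := by
        rw [← sub_eq_zero, ← norm_eq_zero]; exact h'.symm
      have e2 : ρ = 0 := h'.symm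
      rw [e2, e] at hneg
      simp [hg, hh] at hneg
  have hρlt : ρ < R := by
    rcases hρR.lt_or_eq with h' | h'
    · exact h'
    · exfalso
      rw [h', hgf, div_self hR.ne'] at hneg
      have := hu0 x₀ (hB hx₀)
      simp at hneg
      linarith
  set k := u x₀ - g ρ with hk
  set P : ℝ → ℝ := fun t => k + h - (3 * h / (2 * R)) *
    (ρ + (t - ρ^2) / (2*ρ) - (t - ρ^2)^2 / (8*ρ^3) + (t - ρ^2)^3 / (16 * ρ^5))
    + (h / (2 * R ^ 2)) * t with hP
  set P' : ℝ → ℝ := fun t => - (3 * h / (2 * R)) *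
    (1 / (2*ρ) - (t - ρ^2) / (4*ρ^3) + 3 * (t - ρ^2)^2 / (16 * ρ^5))
    + (h / (2 * R ^ 2)) with hP'
  set P'' : ℝ → ℝ := fun t => - (3 * h / (2 * R)) *
    (- 1 / (4*ρ^3) + 3 * (t - ρ^2) / (8 * ρ^5)) with hP''
  have d0 : ∀ t, HasDerivAt (fun t : ℝ => t - ρ^2) 1 t := fun t => (hasDerivAt_id t).sub_const _
  have d1 : ∀ t, HasDerivAt P (P' t) t := by
    intro t
    have := ((((((d0 t).div_const (2*ρ)).const_add ρ).sub (((d0 t).pow 2).div_const (8*ρ^3))).add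
      (((d0 t).pow 3).div_const (16*ρ^5))).const_mul (3 * h / (2 * R))).const_sub (k + h) |>.add
      ((hasDerivAt_id t).const_mul (h / (2 * R ^ 2)))
    refine this.congr_deriv ?_
    simp only [hP']; push_cast; field_simp; ring
  have d2 : ∀ t, HasDerivAt P' (P'' t) t := by
    intro t
    have := (((((d0 t).div_const (4*ρ^3)).const_sub (1/(2*ρ))).add
      ((((d0 t).pow 2).const_mul 3).div_const (16*ρ^5))).const_mul
        (-(3 * h / (2 * R)))).add_const (h / (2 * R ^ 2))
    refine this.congr_deriv ?_
    simp only [hP'']; push_cast; field_simp; ring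
  have hcd : ContDiff ℝ 2 P := by simp only [hP]; fun_prop
  have hPle : ∀ s, 0 ≤ s → P (s ^ 2) ≤ k + g s := by
    intro s hs
    have := mul_le_mul_of_nonneg_left (sqrt_taylor s ρ hs hρ0)
      (show 0 ≤ 3 * h / (2 * R) by positivity)
    simp only [hP, hg]; linarith
  have hPeq : P (ρ ^ 2) = u x₀ := by
    simp only [hP, hk, hg]; ring
  have hvis := hsol (fun z => P (‖z - y‖ ^ 2)) (contDiff_radial P hcd y) x₀ (hB hx₀) hPeq (by
    have hnb : closedBall y R ∈ nhds x₀ :=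
      closedBall_mem_nhds_of_mem (by rw [mem_ball, dist_eq_norm]; exact hρlt)
    filter_upwards [hnb] with x hx
    have h1 := hmin hx
    simp only [mem_ofPred_eq] at h1
    have h2 := hPle ‖x - y‖ (norm_nonneg _)
    have h3 : P (‖x₀ - y‖ ^ 2) = u x₀ := hPeq
    rw [h3]
    linarith)
  rw [infLap_radial P P' P'' d1 d2 y x₀, ← hρd] at hvis
  simp only [hPeq] at hvis
  have hgle : g ρ ≤ h := by
    have : g ρ = h - (h * ρ / (2 * R ^ 2)) * (3 * R - ρ) := by
      simp only [hg]; field_simp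
      ring
    have h4 : 0 ≤ (h * ρ / (2 * R ^ 2)) * (3 * R - ρ) :=
      mul_nonneg (by positivity) (by linarith)
    linarith
  have hfu : f (u x₀) ≤ f h := hfmono (hu0 x₀ (hB hx₀)) hy.le (by linarith)
  have hval : 8 * P' (ρ ^ 2) ^ 3 * ρ ^ 2 + 16 * P' (ρ ^ 2) ^ 2 * P'' (ρ ^ 2) * (ρ ^ 2) ^ 2
      = h ^ 3 / (4 * R ^ 4) + h ^ 3 / R ^ 4 * (1 - ρ / R) * (2 - ρ / R) := by
    simp only [hP', hP'', sub_self]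
    field_simp
    ring
  have : 0 ≤ h ^ 3 / R ^ 4 * (1 - ρ / R) * (2 - ρ / R) := by
    have a : ρ / R < 1 := by rw [div_lt_one hR]; exact hρlt
    have : 0 ≤ 1 - ρ / R := by linarith
    have : 0 ≤ 2 - ρ / R := by linarith
    positivity
  linarith

lemma nondegen {n : ℕ} (Ω : Set (EuclideanSpace ℝ (Fin n)))
    (f : ℝ → ℝ) (hfmono : MonotoneOn f (Ici 0)) (A γ s₀ : ℝ) (hA : 0 < A)
    (hfA : ∀ s, 0 < s → s ≤ s₀ → A * s ^ γ ≤ f s) (hs₀ : 0 < s₀)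
    (m : ℕ) (hm : 1 ≤ m) (hmγ : m * γ ≤ 3 * m - 2)
    (u : EuclideanSpace ℝ (Fin n) → ℝ)
    (huc : ContinuousOn u Ω) (hu0 : ∀ x ∈ Ω, 0 ≤ u x)
    (hsol : IsViscSubsol Ω u (fun _ t => f t)) (y : EuclideanSpace ℝ (Fin n)) (r H : ℝ)
    (hr : 0 < r) (hB : closedBall y r ⊆ Ω) (hy : 0 < u y) (hH : 0 < H) (hHs : H ≤ s₀)
    (hHr : H ^ 3 / r ^ 4 * (8 * m ^ 3 * (2 * m - 1)) < A * H ^ γ) :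
    ∃ z ∈ closedBall y r, H ≤ u z := by
  by_contra hcon
  push Not at hcon
  obtain ⟨x₀, hx₀, hmax⟩ := (isCompact_closedBall y r).exists_isMaxOn
    (f := fun x => u x - H * (‖x - y‖ ^ 2 / r ^ 2) ^ m) ⟨y, by simp [hr.le]⟩
    ((huc.mono hB).sub (by apply Continuous.continuousOn; fun_prop))
  obtain ⟨l, rfl⟩ : ∃ l, m = l + 1 := ⟨m - 1, by omega⟩
  have hy0 := hmax (mem_closedBall_self hr.le)
  simp only [mem_ofPred_eq, sub_self, norm_zero] at hy0
  have hpos : 0 < u x₀ - H * (‖x₀ - y‖ ^ 2 / r ^ 2) ^ (l + 1) := by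
    refine lt_of_lt_of_le hy ?_
    simpa using hy0
  set ρ := ‖x₀ - y‖ with hρd
  have hρR : ρ ≤ r := by rw [mem_closedBall, dist_eq_norm] at hx₀; exact hx₀
  have hρ0 : 0 ≤ ρ := norm_nonneg _
  have hρlt : ρ < r := by
    rcases hρR.lt_or_eq with h' | h'
    · exact h'
    · exfalso
      rw [h', div_self (by positivity)] at hpos
      have := hcon x₀ hx₀
      simp at hpos
      linarith
  set τ := ρ ^ 2 / r ^ 2 with hτ
  have hτ0 : 0 ≤ τ := by positivity
  have hτ1 : τ ≤ 1 := by
    rw [hτ, div_le_one (by positivity)]; gcongr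
  have huH := hcon x₀ hx₀
  set k := u x₀ - H * τ ^ (l + 1) with hk
  set P : ℝ → ℝ := fun t => k + H * (t / r ^ 2) ^ (l + 1) with hP
  set P' : ℝ → ℝ := fun t => H * ((l + 1) * (t / r ^ 2) ^ l * (1 / r ^ 2)) with hP'
  set P'' : ℝ → ℝ := fun t => H * ((l + 1) * (l * (t / r ^ 2) ^ (l - 1) * (1 / r ^ 2))
    * (1 / r ^ 2)) with hP''
  have d0 : ∀ t, HasDerivAt (fun t : ℝ => t / r ^ 2) (1 / r ^ 2) t :=
    fun t => (hasDerivAt_id t).div_const _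
  have d1 : ∀ t, HasDerivAt P (P' t) t := by
    intro t
    have := (((d0 t).pow (l + 1)).const_mul H).const_add k
    refine this.congr_deriv ?_
    simp only [hP']; push_cast; simp
  have d2 : ∀ t, HasDerivAt P' (P'' t) t := by
    intro t
    have := ((((d0 t).pow l).const_mul ((l : ℝ) + 1)).mul_const (1 / r ^ 2)).const_mul H
    exact this
  have hcd : ContDiff ℝ 2 P := by simp only [hP]; fun_prop
  have hPeq : P (ρ ^ 2) = u x₀ := by
    simp only [hP, hk, ← hτ]; ring
  have hvis := hsol (fun z => P (‖z - y‖ ^ 2)) (contDiff_radial P hcd y) x₀ (hB hx₀) hPeq (by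
    have hnb : closedBall y r ∈ nhds x₀ :=
      closedBall_mem_nhds_of_mem (by rw [mem_ball, dist_eq_norm]; exact hρlt)
    filter_upwards [hnb] with x hx
    have h1 := hmax hx
    simp only [mem_ofPred_eq] at h1
    have h3 : P (‖x₀ - y‖ ^ 2) = u x₀ := hPeq
    rw [h3]
    simp only [hP]
    linarith)
  rw [infLap_radial P P' P'' d1 d2 y x₀, ← hρd] at hvis
  simp only [hPeq] at hvis
  have hρτ : ρ ^ 2 = τ * r ^ 2 := by rw [hτ]; field_simp
  have hval : 8 * P' (ρ ^ 2) ^ 3 * ρ ^ 2 + 16 * P' (ρ ^ 2) ^ 2 * P'' (ρ ^ 2) * (ρ ^ 2) ^ 2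
      = H ^ 3 / r ^ 4 * (8 * ((l + 1 : ℕ) : ℝ) ^ 3 * (2 * ((l + 1 : ℕ) : ℝ) - 1)) *
        τ ^ (3 * l + 1) := by
    simp only [hP', hP'', ← hτ]
    rw [hρτ]
    rcases l with _ | l
    · simp
      field_simp
      norm_num
    · push_cast
      field_simp
      ring
  rw [hval] at hvis
  set K := H ^ 3 / r ^ 4 * (8 * ((l + 1 : ℕ) : ℝ) ^ 3 * (2 * ((l + 1 : ℕ) : ℝ) - 1)) with hK
  rcases hτ0.lt_or_eq with hτp | hτz
  · have hφ0 : 0 < H * τ ^ (l + 1) := by positivity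
    have h1 : A * (H * τ ^ (l + 1)) ^ γ ≤ f (H * τ ^ (l + 1)) :=
      hfA _ hφ0 (by linarith)
    have h2 : f (H * τ ^ (l + 1)) ≤ f (u x₀) :=
      hfmono hφ0.le (hu0 x₀ (hB hx₀)) (by linarith)
    have e0 : (H * τ ^ (l + 1)) ^ γ = H ^ γ * τ ^ (((l + 1 : ℕ) : ℝ) * γ) := by
      rw [Real.mul_rpow hH.le (by positivity), ← Real.rpow_natCast, ← Real.rpow_mul hτ0]
    rw [e0] at h1
    have h3 : τ ^ (3 * l + 1) ≤ τ ^ (((l + 1 : ℕ) : ℝ) * γ) := by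
      rw [← Real.rpow_natCast]
      apply Real.rpow_le_rpow_of_exponent_ge hτp hτ1
      push_cast at hmγ ⊢
      linarith
    have h4 : 0 < τ ^ (((l + 1 : ℕ) : ℝ) * γ) := by positivity
    have hK0 : 0 ≤ K := by
      rw [hK]; push_cast
      have : (0 : ℝ) ≤ 2 * (l + 1) - 1 := by linarith [(Nat.cast_nonneg l : (0 : ℝ) ≤ l)]
      positivity
    have h5 := mul_le_mul_of_nonneg_left h3 hK0
    have h6 := mul_lt_mul_of_pos_right hHr h4
    linarith
  · rw [← hτz] at hvis
    have hux : 0 < u x₀ := by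
      rw [hk, ← hτz] at hpos; simpa using hpos
    have := hfA (u x₀) hux (by linarith)
    have h2 : 0 < A * u x₀ ^ γ := by positivity
    simp at hvis
    linarith

lemma porous_null {n : ℕ} (S : Set (EuclideanSpace ℝ (Fin n)))
    (h : ∀ x ∈ S, ∃ κ > 0, ∃ r₀ > 0, ∀ r, 0 < r → r < r₀ → ∃ z,
      ball z (κ * r) ⊆ closedBall x r ∧ Disjoint (ball z (κ * r)) S) : volume S = 0 := by
  have hd := Besicovitch.ae_tendsto_measure_inter_div (volume : Measure (EuclideanSpace ℝ (Fin n))) S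
  have key : ∀ᵐ x ∂(volume.restrict S), x ∉ S := by
    filter_upwards [hd] with x hx hxS
    obtain ⟨κ, hκ, r₀, hr₀, hr⟩ := h x hxS
    set V := volume (ball (0 : EuclideanSpace ℝ (Fin n)) 1) with hV
    have hV0 : V ≠ 0 := (measure_ball_pos _ _ one_pos).ne'
    have hVt : V ≠ ⊤ := measure_ball_lt_top.ne
    have hle : ∀ᶠ r in nhdsWithin (0 : ℝ) (Ioi 0),
        volume (S ∩ closedBall x r) / volume (closedBall x r) ≤ 1 - ENNReal.ofReal (κ ^ n) := by
      filter_upwards [Ioo_mem_nhdsGT hr₀] with r hrr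
      obtain ⟨z, hz1, hz2⟩ := hr r hrr.1 hrr.2
      have e1 : volume (closedBall x r) = ENNReal.ofReal (r ^ n) * V := by
        rw [Measure.addHaar_closedBall _ _ hrr.1.le]; simp [hV]
      have e2 : volume (ball z (κ * r)) = ENNReal.ofReal (κ ^ n) * (ENNReal.ofReal (r ^ n) * V) := by
        rw [Measure.addHaar_ball_of_pos _ _ (mul_pos hκ hrr.1)]
        simp only [finrank_euclideanSpace, Fintype.card_fin]
        rw [mul_pow, ENNReal.ofReal_mul (by positivity), mul_assoc]
      have hc0 : volume (closedBall x r) ≠ 0 := (measure_closedBall_pos _ _ hrr.1).ne'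
      have hct : volume (closedBall x r) ≠ ⊤ := measure_closedBall_lt_top.ne
      have hsub : S ∩ closedBall x r ⊆ closedBall x r \ ball z (κ * r) := by
        intro w hw
        exact ⟨hw.2, fun h' => hz2.le_bot ⟨h', hw.1⟩⟩
      have hm : volume (S ∩ closedBall x r) ≤
          (1 - ENNReal.ofReal (κ ^ n)) * volume (closedBall x r) := by
        refine (measure_mono hsub).trans ?_
        rw [measure_sdiff hz1 measurableSet_ball.nullMeasurableSet measure_ball_lt_top.ne, e2, ← e1,
          ENNReal.sub_mul (fun _ _ => hct), one_mul]
      exact ENNReal.div_le_of_le_mul hm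
    have h1 := le_of_tendsto hx hle
    have h2 : (1 : ENNReal) - ENNReal.ofReal (κ ^ n) < 1 :=
      ENNReal.sub_lt_self ENNReal.one_ne_top one_ne_zero (by
        simp only [ne_eq, ENNReal.ofReal_eq_zero, not_le]; positivity)
    exact absurd h1 (not_le.2 h2)
  rw [ae_iff] at key
  simp only [not_not, ofPred_mem_eq] at key
  rwa [Measure.restrict_apply_self] at key

/-- The free boundary has Lebesgue measure zero (Corollary 4.2). -/
theorem free_boundary_null {n : ℕ} (Ω : Set (EuclideanSpace ℝ (Fin n))) (hΩo : IsOpen Ω)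
    (f : ℝ → ℝ) (M N γ : ℝ) (hM : 0 < M) (hN : 0 < N) (hγ0 : 0 ≤ γ) (hγ3 : γ < 3)
    (hfc : ContinuousOn f (Ici 0)) (hfmono : MonotoneOn f (Ici 0))
    (hf12 : Cond12 f M γ) (hf51 : Cond51 f N γ)
    (u : EuclideanSpace ℝ (Fin n) → ℝ)
    (huc : ContinuousOn u Ω) (hu0 : ∀ x ∈ Ω, 0 ≤ u x)
    (hub : ∃ B, ∀ x ∈ Ω, u x ≤ B)
    (hsol : IsViscSol Ω u (fun _ t => f t)) :
    volume (frontier {x | x ∈ Ω ∧ 0 < u x} ∩ Ω) = 0 := by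
  set U : Set (EuclideanSpace ℝ (Fin n)) := {x | x ∈ Ω ∧ 0 < u x} with hU
  have hUo : IsOpen U := by
    have := huc.isOpen_inter_preimage hΩo (isOpen_Ioi (a := (0 : ℝ)))
    exact this
  have hdisj : ∀ V : Set (EuclideanSpace ℝ (Fin n)), V ⊆ U → Disjoint V (frontier U ∩ Ω) := by
    intro V hV
    rw [Set.disjoint_left]
    intro w hw hw2
    have := hw2.1
    rw [hUo.frontier_eq] at this
    exact this.2 (hV hw)
  have hzero : ∀ x ∈ frontier U ∩ Ω, u x = 0 ∧ x ∈ closure U := by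
    intro x hx
    have h1 := hx.1
    rw [hUo.frontier_eq] at h1
    refine ⟨le_antisymm ?_ (hu0 x hx.2), h1.1⟩
    by_contra h2
    exact h1.2 ⟨hx.2, not_le.1 h2⟩
  -- a small ball on which u is small
  have hsmall : ∀ x ∈ frontier U ∩ Ω, ∀ s > 0, ∃ d > 0, ∀ z, dist z x < d → z ∈ Ω ∧ u z < s := by
    intro x hx s hs
    have h1 : ∀ᶠ z in nhds x, u z < s :=
      (huc.continuousAt (hΩo.mem_nhds hx.2)).eventually_lt_const (by rw [(hzero x hx).1]; exact hs)
    have h2 : ∀ᶠ z in nhds x, z ∈ Ω := hΩo.mem_nhds hx.2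
    obtain ⟨d, hd, h3⟩ := Metric.eventually_nhds_iff.1 (h2.and h1)
    exact ⟨d, hd, fun z hz => h3 hz⟩
  obtain ⟨δ₁, hδ₁, hc1⟩ := hf12 1 one_pos
  obtain ⟨δ₂, hδ₂, hc2⟩ := hf51 1 one_pos
  have hf1 : 0 ≤ f 1 := by
    have := (hc2 1 one_pos le_rfl δ₂ hδ₂ le_rfl).2
    by_contra h
    push Not at h
    have : N * δ₂ ^ γ * f 1 < 0 := mul_neg_of_pos_of_neg (by positivity) h
    linarith
  rcases hf1.lt_or_eq with hf1 | hf1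
  swap
  · -- degenerate case
    have : frontier U ∩ Ω = ∅ := by
      rw [Set.eq_empty_iff_forall_notMem]
      intro x hx
      obtain ⟨d, hd, hdx⟩ := hsmall x hx 1 one_pos
      obtain ⟨y, hy, hyd⟩ := Metric.mem_closure_iff.1 (hzero x hx).2 (d / 3) (by positivity)
      have hpos := positivity_ball Ω f hfmono u huc hu0 hsol.1 y (d / 3) (by positivity) (by
        intro z hz
        refine (hdx z ?_).1
        have := dist_triangle z y x
        rw [mem_closedBall] at hz
        rw [dist_comm y x] at this
        linarith) hy.2 (by
        have h1 : f (u y) ≤ f 1 := hfmono hy.2.le (Set.mem_Ici.2 zero_le_one)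
          (hdx y (by rw [dist_comm]; linarith)).2.le
        have := hy.2
        have h2 : 0 < u y ^ 3 / (4 * (d / 3) ^ 4) := by positivity
        linarith) x (by rw [mem_ball]; exact hyd)
      rw [(hzero x hx).1] at hpos
      exact lt_irrefl _ hpos
    rw [this, measure_empty]
  -- main case
  set s₀ := min δ₁ δ₂ with hs₀d
  have hs₀ : 0 < s₀ := lt_min hδ₁ hδ₂
  set A := N * f 1 with hA
  set A' := M * f 1 with hA'
  have hApos : 0 < A := mul_pos hN hf1
  have hA'pos : 0 < A' := mul_pos hM hf1
  have hfA : ∀ s, 0 < s → s ≤ s₀ → A * s ^ γ ≤ f s := by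
    intro s hs hs'
    have := (hc2 1 one_pos le_rfl s hs (hs'.trans (min_le_right _ _))).1
    rw [mul_one] at this
    rw [hA]; linarith
  have hfA' : ∀ s, 0 < s → s ≤ s₀ → f s ≤ A' * s ^ γ := by
    intro s hs hs'
    have := (hc1 1 one_pos le_rfl s hs (hs'.trans (min_le_left _ _))).2
    rw [mul_one] at this
    rw [hA']; linarith
  have hβ : 0 < 3 - γ := by linarith
  obtain ⟨m, hm⟩ := exists_nat_ge (2 / (3 - γ))
  rw [div_le_iff₀ hβ] at hm
  have hm1 : 1 ≤ m := by
    rcases Nat.eq_zero_or_pos m with h | h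
    · rw [h] at hm; norm_num at hm
    · exact h
  have hm1' : (1 : ℝ) ≤ m := by exact_mod_cast hm1
  set Q : ℝ := 8 * m ^ 3 * (2 * m - 1) with hQ
  have hQ0 : 0 < Q := by
    have : (0 : ℝ) < 2 * m - 1 := by linarith
    positivity
  -- H(r) ^ (3 - γ) = c * r ^ 4
  set c := A / (2 * Q) with hc
  have hc0 : 0 < c := by positivity
  have hcube : ∀ s : ℝ, 0 < s → s ^ 3 = s ^ (3 - γ) * s ^ γ := by
    intro s hs
    rw [← Real.rpow_add hs]
    norm_num
  -- choose κ with 4 A' κ ^ 4 < c and κ < 1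
  obtain ⟨κ, hκ0, hκ1, hκ⟩ : ∃ κ : ℝ, 0 < κ ∧ κ < 1 ∧ 4 * A' * κ ^ 4 < c := by
    set κ := min (1 / 2) (c / (8 * A')) with hκ
    have h0 : 0 < κ := lt_min (by norm_num) (by positivity)
    have h1 : κ ≤ 1 / 2 := min_le_left _ _
    have h2 : κ ≤ c / (8 * A') := min_le_right _ _
    refine ⟨κ, h0, by linarith, ?_⟩
    have h3 : κ ^ 4 ≤ κ := by
      have := pow_le_pow_of_le_one h0.le (by linarith : κ ≤ 1) (show 1 ≤ 4 by norm_num)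
      simpa using this
    rw [le_div_iff₀ (by positivity)] at h2
    nlinarith
  apply porous_null
  intro x hx
  obtain ⟨d, hd, hdx⟩ := hsmall x hx s₀ hs₀
  refine ⟨κ / 3, by positivity, d, hd, ?_⟩
  intro r3 hr30 hr3d
  obtain ⟨r, rfl⟩ : ∃ r, r3 = 3 * r := ⟨r3 / 3, by ring⟩
  have hr : 0 < r := by linarith
  obtain ⟨y, hy, hyd⟩ := Metric.mem_closure_iff.1 (hzero x hx).2 r hr
  rw [dist_comm] at hyd
  have hBy : closedBall y r ⊆ ball x d := by
    intro z hz
    have := dist_triangle z y x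
    rw [mem_closedBall] at hz
    rw [mem_ball]
    linarith
  have hex : ∃ z ∈ closedBall y r, c * r ^ 4 ≤ u z ^ (3 - γ) ∧ 0 < u z := by
    set H := min s₀ ((c * r ^ 4) ^ (1 / (3 - γ))) with hH
    have hH0 : 0 < H := lt_min hs₀ (by positivity)
    have hHle : H ^ (3 - γ) ≤ c * r ^ 4 := by
      calc H ^ (3 - γ) ≤ ((c * r ^ 4) ^ (1 / (3 - γ))) ^ (3 - γ) :=
            Real.rpow_le_rpow hH0.le (min_le_right _ _) hβ.le
        _ = c * r ^ 4 := by
            rw [← Real.rpow_mul (by positivity), one_div_mul_cancel hβ.ne', Real.rpow_one]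
    obtain ⟨z, hz, hHz⟩ := nondegen Ω f hfmono A γ s₀ hApos hfA hs₀ m hm1 (by linarith) u huc hu0
      hsol.2 y r H hr (fun z hz => (hdx z (hBy hz)).1) hy.2 hH0 (min_le_left _ _) (by
        rw [hcube H hH0, ← hQ]
        have h1 : 0 < H ^ γ := by positivity
        have h2 : H ^ (3 - γ) / r ^ 4 ≤ c := by
          rw [div_le_iff₀ (by positivity)]; exact hHle
        have h3 : c * Q = A / 2 := by rw [hc]; field_simp
        have h4 : H ^ (3 - γ) / r ^ 4 * Q ≤ c * Q := mul_le_mul_of_nonneg_right h2 hQ0.le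
        calc H ^ (3 - γ) * H ^ γ / r ^ 4 * Q = (H ^ (3 - γ) / r ^ 4 * Q) * H ^ γ := by ring
          _ < A * H ^ γ := mul_lt_mul_of_pos_right (by linarith) h1)
    have hzs := (hdx z (hBy hz)).2
    have hH2 : H = (c * r ^ 4) ^ (1 / (3 - γ)) := by
      rcases min_choice s₀ ((c * r ^ 4) ^ (1 / (3 - γ))) with h | h
      · rw [← hH] at h; linarith
      · exact h
    refine ⟨z, hz, ?_, lt_of_lt_of_le hH0 hHz⟩
    calc c * r ^ 4 = ((c * r ^ 4) ^ (1 / (3 - γ))) ^ (3 - γ) := by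
            rw [← Real.rpow_mul (by positivity), one_div_mul_cancel hβ.ne', Real.rpow_one]
      _ = H ^ (3 - γ) := by rw [hH2]
      _ ≤ u z ^ (3 - γ) := Real.rpow_le_rpow hH0.le hHz hβ.le
  obtain ⟨z, hz, hzc, hz0⟩ := hex
  have hzs := (hdx z (hBy hz)).2
  have eκ : κ / 3 * (3 * r) = κ * r := by ring
  rw [eκ]
  have hκr : κ * r < r := by nlinarith
  have hsub : closedBall z (κ * r) ⊆ ball x (3 * r) := by
    intro w hw
    rw [mem_closedBall] at hw hz
    have h1 := dist_triangle w z x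
    have h2 := dist_triangle z y x
    rw [mem_ball]
    linarith
  have hsubΩ : closedBall z (κ * r) ⊆ Ω := fun w hw => (hdx w (lt_trans (hsub hw) hr3d)).1
  refine ⟨z, (ball_subset_closedBall.trans hsub).trans ball_subset_closedBall, hdisj _ ?_⟩
  intro w hw
  refine ⟨hsubΩ (ball_subset_closedBall hw), ?_⟩
  refine positivity_ball Ω f hfmono u huc hu0 hsol.1 z (κ * r) (by positivity) hsubΩ hz0 ?_ w hw
  refine lt_of_le_of_lt (hfA' (u z) hz0 hzs.le) ?_
  rw [lt_div_iff₀ (by positivity), hcube (u z) hz0]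
  have h1 : 0 < u z ^ γ := by positivity
  have h2 : 4 * A' * κ ^ 4 * r ^ 4 < c * r ^ 4 := mul_lt_mul_of_pos_right hκ (by positivity)
  calc A' * u z ^ γ * (4 * (κ * r) ^ 4) = (4 * A' * κ ^ 4 * r ^ 4) * u z ^ γ := by ring
    _ < u z ^ (3 - γ) * u z ^ γ := mul_lt_mul_of_pos_right (by linarith) h1
end

section
/- Strong unique continuation in the borderline case: Let Ω ⊂ ℝⁿ be open and connected, and let f : [0,∞) → ℝ be continuous, non-decreasing, and satisfy condition (6.1) with constant M > 0 (the case γ = 3). If u ∈ C(Ω) is a bounded non-negative viscosity solution of Δ∞u = f(u) in Ω and u(z) = 0 for some z ∈ Ω, then u ≡ 0 in Ω. -/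
open Set Metric Filter MeasureTheory

/-- Condition (6.1): for every `T > 0` there is `δ₀ > 0` such that
`0 ≤ f(δt) ≤ M δ³ f(t)` for all `0 < t ≤ T` and `0 < δ ≤ δ₀`. -/
def Cond61 (f : ℝ → ℝ) (M : ℝ) : Prop :=
  ∀ T > 0, ∃ δ₀ > 0, ∀ t : ℝ, 0 < t → t ≤ T → ∀ δ : ℝ, 0 < δ → δ ≤ δ₀ →
    0 ≤ f (δ * t) ∧ f (δ * t) ≤ M * δ ^ 3 * f t

lemma aux_fderiv {n : ℕ} (x : EuclideanSpace ℝ (Fin n)) (m a c : ℝ)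
    (w : EuclideanSpace ℝ (Fin n)) (i : Fin n) :
    fderiv ℝ (fun w => m * Real.exp (-a * ‖w - x‖ ^ 2) + c) w (EuclideanSpace.single i 1)
      = m * Real.exp (-a * ‖w - x‖ ^ 2) * (-2 * a * (w i - x i)) := by
  have h1 : HasFDerivAt (fun w : EuclideanSpace ℝ (Fin n) => w - x)
      (ContinuousLinearMap.id ℝ _) w := (hasFDerivAt_id w).sub_const x
  have h2 := ((((h1.norm_sq).const_mul (-a)).exp.const_mul m).add_const c).fderiv
  rw [h2]
  simp [EuclideanSpace.inner_single_right]
  ring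

lemma aux_infLap {n : ℕ} (x : EuclideanSpace ℝ (Fin n)) (m a c : ℝ)
    (w : EuclideanSpace ℝ (Fin n)) :
    infLap (fun w => m * Real.exp (-a * ‖w - x‖ ^ 2) + c) w
      = (m * Real.exp (-a * ‖w - x‖ ^ 2)) ^ 3 *
        (4 * a ^ 2 * ‖w - x‖ ^ 2 * (4 * a ^ 2 * ‖w - x‖ ^ 2 - 2 * a)) := by
  have key : ∀ i j : Fin n, fderiv ℝ (fun y => fderiv ℝ
      (fun w => m * Real.exp (-a * ‖w - x‖ ^ 2) + c) y (EuclideanSpace.single i 1)) w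
        (EuclideanSpace.single j 1) = m * Real.exp (-a * ‖w - x‖ ^ 2) *
        (4 * a ^ 2 * (w i - x i) * (w j - x j) - 2 * a * (if i = j then 1 else 0)) := by
    intro i j
    simp_rw [aux_fderiv]
    have h1 : HasFDerivAt (fun w : EuclideanSpace ℝ (Fin n) => w - x)
      (ContinuousLinearMap.id ℝ _) w := (hasFDerivAt_id w).sub_const x
    have h2 := (((h1.norm_sq).const_mul (-a)).exp.const_mul m)
    have h3 : HasFDerivAt (fun w : EuclideanSpace ℝ (Fin n) => w i)
      (EuclideanSpace.proj i : EuclideanSpace ℝ (Fin n) →L[ℝ] ℝ) w :=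
        (EuclideanSpace.proj i : EuclideanSpace ℝ (Fin n) →L[ℝ] ℝ).hasFDerivAt
    have h4 := (h2.mul ((h3.sub_const (x i)).const_mul (-2 * a))).fderiv
    erw [h4]
    simp [EuclideanSpace.inner_single_right, Pi.single_apply]
    split_ifs <;> ring
  unfold infLap
  simp_rw [key, aux_fderiv]
  have hn : ‖w - x‖ ^ 2 = ∑ i, (w i - x i) ^ 2 := by
    simp [EuclideanSpace.norm_sq_eq]
  generalize Real.exp (-a * ‖w - x‖ ^ 2) = E
  rw [hn]
  have e : ∀ i j : Fin n, m * E * (-2 * a * (w i - x i)) * (m * E * (-2 * a * (w j - x j))) *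
      (m * E * (4 * a ^ 2 * (w i - x i) * (w j - x j) - 2 * a * (if i = j then 1 else 0)))
      = (m * E) ^ 3 * 16 * a ^ 4 * ((w i - x i) ^ 2 * (w j - x j) ^ 2)
        - (if i = j then (m * E) ^ 3 * 8 * a ^ 3 * ((w i - x i) * (w j - x j)) else 0) := by
    intro i j
    split_ifs <;> ring
  simp_rw [e, Finset.sum_sub_distrib, Finset.sum_ite_eq, Finset.mem_univ, if_true,
    ← Finset.mul_sum, ← pow_two, ← Finset.sum_mul]
  ring

lemma aux_smooth {n : ℕ} (x : EuclideanSpace ℝ (Fin n)) (m a c : ℝ) :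
    ContDiff ℝ 2 (fun w => m * Real.exp (-a * ‖w - x‖ ^ 2) + c) := by
  have : ContDiff ℝ 2 (fun w : EuclideanSpace ℝ (Fin n) => ‖w - x‖ ^ 2) :=
    (contDiff_id.sub contDiff_const).norm_sq ℝ
  exact (contDiff_const.mul (contDiff_const.mul this).exp).add contDiff_const

/-- No interior ball of positivity can touch the zero set. -/
lemma aux_ball {n : ℕ} (Ω : Set (EuclideanSpace ℝ (Fin n)))
    (hΩo : IsOpen Ω) (f : ℝ → ℝ) (M : ℝ)
    (hfmono : MonotoneOn f (Ici 0)) (hf : Cond61 f M)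
    (u : EuclideanSpace ℝ (Fin n) → ℝ)
    (huc : ContinuousOn u Ω) (hu0 : ∀ x ∈ Ω, 0 ≤ u x)
    (hsup : IsViscSupersol Ω u (fun _ t => f t))
    (x y : EuclideanSpace ℝ (Fin n)) (R : ℝ) (hR : 0 < R)
    (hsub : closedBall x R ⊆ Ω) (hpos : ∀ w ∈ ball x R, 0 < u w)
    (hy : dist y x = R) (huy : u y = 0) : False := by
  obtain ⟨δ, hδ, hδf⟩ := hf 1 one_pos
  set C := |M * f 1| with hC
  have hC0 : 0 ≤ C := abs_nonneg _
  have hfC : ∀ t, 0 < t → t ≤ δ → f t ≤ C * t ^ 3 := by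
    intro t h1 h2
    have := (hδf 1 one_pos le_rfl t h1 h2).2
    rw [mul_one] at this
    have h3 : M * f 1 * t ^ 3 ≤ C * t ^ 3 := by
      gcongr
      exact le_abs_self _
    linarith
  have hyR : y ∈ closedBall x R := hy.le
  have hyΩ : y ∈ Ω := hsub hyR
  -- lower bound on the inner ball
  have hin : closedBall x (R/2) ⊆ ball x R := closedBall_subset_ball (by linarith)
  obtain ⟨p, hp, hpmin⟩ := (isCompact_closedBall x (R/2)).exists_isMinOn
    ⟨x, mem_closedBall_self (by linarith)⟩
    (huc.mono (hin.trans (ball_subset_closedBall.trans hsub)))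
  set m := min (u p) δ with hm
  have hm0 : 0 < m := lt_min (hpos p (hin hp)) hδ
  have hmin : ∀ w ∈ closedBall x (R/2), m ≤ u w := fun w hw =>
    (min_le_left _ _).trans (hpmin hw)
  set a := 1 + C + 4 / R ^ 2 with ha
  have ha0 : 0 < a := by positivity
  have haR : ∀ r, R / 2 ≤ r → 1 ≤ a * r ^ 2 := by
    intro r hr
    have h1 : (R/2)^2 ≤ r ^ 2 := by gcongr
    have h2 : 4 / R ^ 2 ≤ a := by rw [ha]; linarith
    calc (1:ℝ) = 4 / R ^ 2 * (R/2)^2 := by field_simp; norm_num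
      _ ≤ a * r ^ 2 := by gcongr
  -- contradiction at a touching point
  have touch : ∀ x₀ ∈ Ω, R / 2 ≤ ‖x₀ - x‖ →
      u x₀ ≤ m * Real.exp (-a * ‖x₀ - x‖ ^ 2) - m * Real.exp (-a * R ^ 2) →
      IsLocalMin (fun w => u w - m * Real.exp (-a * ‖w - x‖ ^ 2)) x₀ → False := by
    intro x₀ hx₀ hr hle hloc
    have h := hsup (fun w => m * Real.exp (-a * ‖w - x‖ ^ 2) +
      (u x₀ - m * Real.exp (-a * ‖x₀ - x‖ ^ 2))) (aux_smooth _ _ _ _) x₀ hx₀ (by ring) (by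
        filter_upwards [hloc] with w hw
        linarith)
    rw [aux_infLap] at h
    simp only [add_sub_cancel] at h
    have hE1 : Real.exp (-a * ‖x₀ - x‖ ^ 2) ≤ 1 := by
      rw [Real.exp_le_one_iff]
      nlinarith [sq_nonneg ‖x₀ - x‖]
    set E := Real.exp (-a * ‖x₀ - x‖ ^ 2)
    have hE0 : 0 < E := Real.exp_pos _
    have hER : 0 < m * Real.exp (-a * R ^ 2) := by positivity
    have h5 : f (u x₀) ≤ f (m * E) :=
      hfmono (hu0 _ hx₀) (by positivity : 0 ≤ m * E) (by linarith)
    have h6 := hfC (m * E) (by positivity) (by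
      have : m ≤ δ := min_le_right _ _
      nlinarith)
    have hq := haR _ hr
    set q := ‖x₀ - x‖ ^ 2
    have h7 : C < 4 * a ^ 2 * q * (4 * a ^ 2 * q - 2 * a) := by
      have e1 : 4 * a ≤ 4 * a ^ 2 * q := by nlinarith
      have e2 : 4 * a * (2 * a) ≤ 4 * a ^ 2 * q * (4 * a ^ 2 * q - 2 * a) := by
        gcongr
        linarith
      have e3 : 1 + C ≤ a := by
        have : 0 ≤ 4 / R ^ 2 := by positivity
        linarith
      nlinarith
    have h8 : 0 < (m * E) ^ 3 := by positivity
    nlinarith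
  -- minimize on the closed annulus
  have hvc : Continuous (fun w => m * Real.exp (-a * ‖w - x‖ ^ 2)) := by fun_prop
  set K := closedBall x R ∩ {w | R / 2 ≤ ‖w - x‖} with hK
  have hKc : IsCompact K := (isCompact_closedBall x R).inter_right
    (isClosed_le continuous_const (by fun_prop))
  have hyn : ‖y - x‖ = R := by rw [← dist_eq_norm, hy]
  have hyK : y ∈ K := ⟨hyR, by simp only [mem_setOf_eq]; linarith⟩
  obtain ⟨x₀, hx₀, hx₀min⟩ := hKc.exists_isMinOn ⟨y, hyK⟩
    ((huc.mono (inter_subset_left.trans hsub)).sub hvc.continuousOn)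
  simp only [IsMinOn, IsMinFilter, eventually_principal, Pi.sub_apply] at hx₀min
  set e := m * Real.exp (-a * R ^ 2) with he
  have hout : ∀ w, R ≤ ‖w - x‖ → m * Real.exp (-a * ‖w - x‖ ^ 2) ≤ e := by
    intro w hw
    have : R ^ 2 ≤ ‖w - x‖ ^ 2 := by gcongr
    have : -a * ‖w - x‖ ^ 2 ≤ -a * R ^ 2 := by nlinarith
    rw [he]; gcongr
  by_cases hneg : u x₀ - m * Real.exp (-a * ‖x₀ - x‖ ^ 2) < - e
  · have hx₀Ω : x₀ ∈ Ω := hsub hx₀.1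
    have h2 : R / 2 ≤ ‖x₀ - x‖ := hx₀.2
    have hlt : ‖x₀ - x‖ < R := by
      by_contra hcon
      have := hout x₀ (not_lt.1 hcon)
      have := hu0 _ hx₀Ω
      linarith
    have hgt : R / 2 < ‖x₀ - x‖ := by
      refine lt_of_le_of_ne h2 fun hcon => ?_
      have h3 := hmin x₀ (by rw [mem_closedBall, dist_eq_norm, ← hcon])
      have hE1 : Real.exp (-a * ‖x₀ - x‖ ^ 2) ≤ 1 := by
        rw [Real.exp_le_one_iff]
        nlinarith [sq_nonneg ‖x₀ - x‖]
      have he0 : 0 < e := by positivity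
      nlinarith
    refine touch x₀ hx₀Ω h2 (by linarith) ?_
    have o1 : ∀ᶠ w in nhds x₀, ‖w - x‖ < R :=
      (by fun_prop : Continuous fun w => ‖w - x‖).continuousAt.eventually_lt_const hlt
    have o2 : ∀ᶠ w in nhds x₀, R / 2 < ‖w - x‖ :=
      (by fun_prop : Continuous fun w => ‖w - x‖).continuousAt.eventually_const_lt hgt
    filter_upwards [o1, o2] with w h1 h2
    exact hx₀min w ⟨by rw [mem_closedBall, dist_eq_norm]; exact h1.le, h2.le⟩
  · refine touch y hyΩ (by linarith) (by rw [hyn, huy]; linarith) ?_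
    have o2 : ∀ᶠ w in nhds y, R / 2 < ‖w - x‖ :=
      (by fun_prop : Continuous fun w => ‖w - x‖).continuousAt.eventually_const_lt
        (by linarith)
    filter_upwards [o2, hΩo.mem_nhds hyΩ] with w h2 hwΩ
    rw [hyn, huy]
    rcases le_total ‖w - x‖ R with h | h
    · have := hx₀min w ⟨by rw [mem_closedBall, dist_eq_norm]; exact h, h2.le⟩
      linarith
    · have := hout w h
      have := hu0 w hwΩ
      linarith

/-- Strong unique continuation in the borderline case (Theorem 5.1). -/
theorem borderline_unique_continuation {n : ℕ} (Ω : Set (EuclideanSpace ℝ (Fin n)))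
    (hΩo : IsOpen Ω) (hΩconn : IsConnected Ω)
    (f : ℝ → ℝ) (M : ℝ) (hM : 0 < M)
    (hfc : ContinuousOn f (Ici 0)) (hfmono : MonotoneOn f (Ici 0)) (hf : Cond61 f M)
    (u : EuclideanSpace ℝ (Fin n) → ℝ)
    (huc : ContinuousOn u Ω) (hu0 : ∀ x ∈ Ω, 0 ≤ u x)
    (hub : ∃ B, ∀ x ∈ Ω, u x ≤ B)
    (hsol : IsViscSol Ω u (fun _ t => f t))
    (z : EuclideanSpace ℝ (Fin n)) (hz : z ∈ Ω) (huz : u z = 0) :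
    ∀ x ∈ Ω, u x = 0 := by
  have hopen : ∀ z ∈ Ω, u z = 0 → ∃ ε > 0, ∀ w ∈ ball z ε, u w = 0 := by
    intro z hz huz
    obtain ⟨ρ, hρ, hball⟩ := Metric.isOpen_iff.1 hΩo z hz
    refine ⟨ρ / 2, by linarith, fun x hx => ?_⟩
    rw [mem_ball] at hx
    have hD : closedBall x (dist x z) ⊆ Ω := fun w hw => hball (by
      rw [mem_closedBall] at hw
      rw [mem_ball]
      linarith [dist_triangle w x z])
    by_contra hne
    have hcont := huc.mono hD
    set K := closedBall x (dist x z) ∩ u ⁻¹' {0} with hK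
    have hKc : IsCompact K := (isCompact_closedBall x (dist x z)).of_isClosed_subset
      (hcont.preimage_isClosed_of_isClosed isClosed_closedBall isClosed_singleton)
      inter_subset_left
    obtain ⟨y, hy, hymin⟩ := hKc.exists_isMinOn
      ⟨z, by rw [mem_closedBall, dist_comm], huz⟩
      (by fun_prop : Continuous fun w => dist w x).continuousOn
    have hyx : y ≠ x := fun h => hne (h ▸ hy.2)
    have hsub : closedBall x (dist y x) ⊆ closedBall x (dist x z) :=
      closedBall_subset_closedBall hy.1
    refine aux_ball Ω hΩo f M hfmono hf u huc hu0 hsol.1 x y (dist y x) (dist_pos.2 hyx)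
      (hsub.trans hD) (fun w hw => ?_) rfl hy.2
    have hw' := hsub (ball_subset_closedBall hw)
    refine lt_of_le_of_ne (hu0 w (hD hw')) fun h => ?_
    have := hymin (show w ∈ K from ⟨hw', h.symm⟩)
    simp only [mem_setOf_eq] at this
    exact absurd hw (by rw [mem_ball]; exact not_lt.2 this)
  by_contra hcon
  push Not at hcon
  obtain ⟨x, hx, hux⟩ := hcon
  have hP : IsOpen (Ω ∩ u ⁻¹' {0}ᶜ) := huc.isOpen_inter_preimage hΩo isOpen_compl_singleton
  have hZ : IsOpen (Ω ∩ u ⁻¹' {0}) := by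
    rw [Metric.isOpen_iff]
    rintro w ⟨hw, hw0⟩
    obtain ⟨ε, hε, h⟩ := hopen w hw hw0
    obtain ⟨ε', hε', h'⟩ := Metric.isOpen_iff.1 hΩo w hw
    exact ⟨min ε ε', lt_min hε hε', fun v hv =>
      ⟨h' (ball_subset_ball (min_le_right _ _) hv), h v (ball_subset_ball (min_le_left _ _) hv)⟩⟩
  obtain ⟨w, -, h1, h2⟩ := hΩconn.isPreconnected _ _ hZ hP
    (fun v hv => by
      by_cases h : u v = 0
      · exact Or.inl ⟨hv, h⟩
      · exact Or.inr ⟨hv, h⟩) ⟨z, hz, hz, huz⟩ ⟨x, hx, hx, hux⟩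
  exact h2.2 h1.2
end
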